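/- Define u : ℝ → ℝ by u(x) = (1 − √(1−x))/(1 + √(1−x)). Then for every real r with 0 < r < 1/2, one has ∫_{r}^{1/2} 1/( x · √(1−x) · (4 − log u(x)) ) dx = log( (4 − log u(r)) / (4 − log u(1/2)) ). -/

import Mathlib

/-!
With `s = √(1 - x)` one has `u' = 1 / (s (1 + s)²)` and `(1 - s)(1 + s) = x`, so the logarithmic
derivative of `u` is `1 / (x s)`. Hence the integrand is the derivative of `-log (4 - log u)`
(`hasDerivAt_neg_log`), and the fundamental theorem of calculus applies: `0 < u < 1` on `(0, 1)`
keeps `4 - log u` positive, and the integrand is continuous there.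
-/

noncomputable def u (x : ℝ) : ℝ :=
  (1 - Real.sqrt (1 - x)) / (1 + Real.sqrt (1 - x))

lemma sqrt_one_sub_mem {x : ℝ} (h0 : 0 < x) (h1 : x < 1) :
    0 < Real.sqrt (1 - x) ∧ Real.sqrt (1 - x) < 1 :=
  ⟨Real.sqrt_pos.2 (by linarith), by
    rw [Real.sqrt_lt' one_pos]; linarith⟩

lemma u_pos {x : ℝ} (h0 : 0 < x) (h1 : x < 1) : 0 < u x := by
  obtain ⟨hs0, hs1⟩ := sqrt_one_sub_mem h0 h1
  exact div_pos (by linarith) (by linarith)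

lemma four_sub_log_u_pos {x : ℝ} (h0 : 0 < x) (h1 : x < 1) : 0 < 4 - Real.log (u x) := by
  obtain ⟨hs0, hs1⟩ := sqrt_one_sub_mem h0 h1
  have hu : u x < 1 := by
    unfold u
    rw [div_lt_one (by linarith)]
    linarith
  linarith [Real.log_neg (u_pos h0 h1) hu]

lemma hasDerivAt_log_u {x : ℝ} (h0 : 0 < x) (h1 : x < 1) :
    HasDerivAt (fun y => Real.log (u y)) (1 / (x * Real.sqrt (1 - x))) x := by
  obtain ⟨hs0, hs1⟩ := sqrt_one_sub_mem h0 h1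
  have hsq : Real.sqrt (1 - x) ^ 2 = 1 - x := Real.sq_sqrt (by linarith)
  have hs : HasDerivAt (fun y : ℝ => Real.sqrt (1 - y)) (-1 / (2 * Real.sqrt (1 - x))) x :=
    ((hasDerivAt_id x).const_sub 1).sqrt (by simp only [id]; linarith)
  have hu : HasDerivAt u _ x :=
    (hs.const_sub 1).fun_div (hs.const_add 1) (by positivity)
  convert hu.log (u_pos h0 h1).ne' using 1
  unfold u
  generalize Real.sqrt (1 - x) = s at *
  obtain rfl : x = (1 - s) * (1 + s) := by linarith
  have h2 : 1 - s ≠ 0 := by linarith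
  field_simp
  ring

lemma hasDerivAt_neg_log {x : ℝ} (h0 : 0 < x) (h1 : x < 1) :
    HasDerivAt (fun y => -Real.log (4 - Real.log (u y)))
      (1 / (x * Real.sqrt (1 - x) * (4 - Real.log (u x)))) x := by
  have h := (((hasDerivAt_log_u h0 h1).const_sub 4).log (four_sub_log_u_pos h0 h1).ne').fun_neg
  rwa [neg_div, neg_neg, div_div] at h

theorem integral_eval (r : ℝ) (hr0 : 0 < r) (hr : r < 1 / 2) :
    ∫ x in r..(1 / 2 : ℝ),
        1 / (x * Real.sqrt (1 - x) * (4 - Real.log (u x))) =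
      Real.log ((4 - Real.log (u r)) / (4 - Real.log (u (1 / 2)))) := by
  have hmem : ∀ x ∈ Set.uIcc r (1 / 2), 0 < x ∧ x < 1 := by
    intro x hx
    rw [Set.uIcc_of_le hr.le] at hx
    exact ⟨by linarith [hx.1], by linarith [hx.2]⟩
  rw [intervalIntegral.integral_eq_sub_of_hasDerivAt
    (fun x hx => hasDerivAt_neg_log (hmem x hx).1 (hmem x hx).2)]
  · rw [Real.log_div (four_sub_log_u_pos hr0 (by linarith)).ne'
      (four_sub_log_u_pos (by norm_num) (by norm_num)).ne']
    ring
  · apply ContinuousOn.intervalIntegrable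
    intro x hx
    obtain ⟨h0, h1⟩ := hmem x hx
    have hs := (sqrt_one_sub_mem h0 h1).1
    have hl := four_sub_log_u_pos h0 h1
    have hc : ContinuousAt (fun y => Real.log (u y)) x := (hasDerivAt_log_u h0 h1).continuousAt
    apply ContinuousAt.continuousWithinAt
    refine continuousAt_const.div ?_ (by positivity)
    exact (continuousAt_id.mul (by fun_prop)).mul (continuousAt_const.sub hc)
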